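/- Assume Assumption A. Let Y be a process whose trajectories are continuous w.i.e. (that is, the set of (t,ω) ∈ [0,∞)×Ω such that the trajectory s ↦ Y_s(ω) is real and continuous at the point t is instantly enforceable), let τ: Ω → [0,+∞] be an 𝔽-stopping time and let F be a closed subset of ℝ. Then ρ(ω) := inf{t ≥ τ(ω) : Y_t(ω) ∈ F} (with inf∅ = +∞) is an 𝔽-stopping time. If moreover for each ω with τ(ω) < +∞ the value Y_{τ(ω)}(ω) is an isolated point of F, then σ(ω) := inf{t > τ(ω) : Y_t(ω) ∈ F∖{Y_{τ(ω)}(ω)}} is also an 𝔽-stopping time. -/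

import Mathlib

open MeasureTheory Filter Set
open scoped ENNReal NNReal Topology

noncomputable section

namespace ModelFreeBDG

/-- A martingale space: a filtration `F` on `Ω` (with `F 0` trivial) together with
finitely many basic continuous martingales `S j`, each adapted with all trajectories
continuous.  Time is indexed by `ℝ≥0`. -/
structure MartingaleSpace (Ω : Type*) where
  F : ℝ≥0 → MeasurableSpace Ω
  mono : Monotone F
  F0_trivial : F 0 = ⊥
  d : ℕ
  S : Fin d → ℝ≥0 → Ω → ℝ
  S_adapted : ∀ j t, Measurable[F t] fun ω => S j t ω
  S_cont : ∀ j ω, Continuous fun t => S j t ω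

variable {Ω : Type*}

/-- A stopping time w.r.t. the filtration of `M`, with values in `[0,∞]`. -/
def MartingaleSpace.IsStoppingTime (M : MartingaleSpace Ω) (τ : Ω → ℝ≥0∞) : Prop :=
  ∀ t : ℝ≥0, MeasurableSet[M.F t] {ω | τ ω ≤ (t : ℝ≥0∞)}

/-- `g` is measurable with respect to the σ-field `F_τ` generated by the stopping time `τ`. -/
def MartingaleSpace.MeasStopped (M : MartingaleSpace Ω) (τ : Ω → ℝ≥0∞) (g : Ω → ℝ) : Prop :=
  ∀ B : Set ℝ, MeasurableSet B → ∀ t : ℝ≥0,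
    MeasurableSet[M.F t] {ω | g ω ∈ B ∧ τ ω ≤ (t : ℝ≥0∞)}

/-- A proper sequence of stopping times: nondecreasing, starting from `0`, and on each path
either divergent to `+∞` or eventually constant. -/
structure ProperSeq (M : MartingaleSpace Ω) where
  τ : ℕ → Ω → ℝ≥0∞
  stopping : ∀ n, M.IsStoppingTime (τ n)
  mono : ∀ ω, Monotone fun n => τ n ω
  zero : ∀ ω, τ 0 ω = 0
  proper : ∀ ω, Tendsto (fun n => τ n ω) atTop (𝓝 ⊤) ∨ ∃ n, ∀ m, n ≤ m → τ m ω = τ n ω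

/-- A simple trading strategy. -/
structure SimpleStrategy (M : MartingaleSpace Ω) where
  c : ℝ
  τ : ProperSeq M
  g : ℕ → Ω → ℝ
  g_bdd : ∀ n, ∃ C : ℝ, ∀ ω, |g n ω| ≤ C
  g_meas : ∀ n, M.MeasStopped (τ.τ n) (g n)
  g_top : ∀ n ω, τ.τ n ω = ⊤ → g n ω = 0

/-- `τ(ω) ∧ t`, as an element of `ℝ≥0`. -/
def stopMin (τ : Ω → ℝ≥0∞) (t : ℝ≥0) (ω : Ω) : ℝ≥0 :=
  (min (τ ω) (t : ℝ≥0∞)).toNNReal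

/-- The simple integral `(G·X)_t = c + Σ_{n≥1} g_{n-1}(X_{τ_n∧t} - X_{τ_{n-1}∧t})` for a
real process `X`. -/
def SimpleStrategy.integral {M : MartingaleSpace Ω} (G : SimpleStrategy M)
    (X : ℝ≥0 → Ω → ℝ) (t : ℝ≥0) (ω : Ω) : ℝ :=
  G.c + ∑' n : ℕ,
    G.g n ω * (X (stopMin (G.τ.τ (n + 1)) t ω) ω - X (stopMin (G.τ.τ n) t ω) ω)

/-- A simple capital process: a finite sum `Σ_{j} (G^j · S^j)` over simple trading strategies. -/
def IsSimpleCapital (M : MartingaleSpace Ω) (X : ℝ≥0 → Ω → ℝ) : Prop :=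
  ∃ G : Fin M.d → SimpleStrategy M, ∀ t ω, X t ω = ∑ j, (G j).integral (M.S j) t ω

/-- The class `𝓒` of nonnegative supermartingales: the smallest class of `[-∞,∞]`-valued
processes containing all nonnegative simple capital processes, closed under adding a simple
capital process whenever the sum stays nonnegative, and closed under pointwise `liminf`. -/
inductive IsNonnegSupermart (M : MartingaleSpace Ω) : (ℝ≥0 → Ω → EReal) → Prop
  | simple (X : ℝ≥0 → Ω → ℝ) (hX : IsSimpleCapital M X) (hpos : ∀ t ω, 0 ≤ X t ω) :
      IsNonnegSupermart M fun t ω => (X t ω : EReal)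
  | add (X : ℝ≥0 → Ω → EReal) (Y : ℝ≥0 → Ω → ℝ) (hX : IsNonnegSupermart M X)
      (hY : IsSimpleCapital M Y) (hpos : ∀ t ω, 0 ≤ X t ω + (Y t ω : EReal)) :
      IsNonnegSupermart M fun t ω => X t ω + (Y t ω : EReal)
  | liminf (Xs : ℕ → ℝ≥0 → Ω → EReal) (hXs : ∀ n, IsNonnegSupermart M (Xs n)) :
      IsNonnegSupermart M fun t ω => Filter.liminf (fun n => Xs n t ω) atTop

/-- The upper expectation `Ē Y` of a generalized process `Y`: the infimum of the (deterministic)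
initial values of nonnegative supermartingales dominating `Y`. -/
def upperExp (M : MartingaleSpace Ω) (Y : ℝ≥0 → Ω → EReal) : EReal :=
  sInf {x : EReal | ∃ X, IsNonnegSupermart M X ∧ (∀ ω, X 0 ω = x) ∧
    ∀ t ω, Y t ω ≤ X t ω}

/-- The outer measure `P̄ A := Ē 1_A` of a set of pairs `(t, ω)`. -/
def upperProb (M : MartingaleSpace Ω) (A : Set (ℝ≥0 × Ω)) : EReal :=
  upperExp M fun t ω => A.indicator (fun _ => (1 : EReal)) (t, ω)

/-- A set `E ⊆ [0,∞) × Ω` is instantly enforceable if some nonnegative supermartingale with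
initial value `1` becomes `+∞` outside of `E`. -/
def InstantlyEnforceable (M : MartingaleSpace Ω) (E : Set (ℝ≥0 × Ω)) : Prop :=
  ∃ X, IsNonnegSupermart M X ∧ (∀ ω, X 0 ω = 1) ∧
    ∀ t ω, (t, ω) ∉ E → X t ω = ⊤

/-- A set is instantly blockable iff its complement is instantly enforceable. -/
def InstantlyBlockable (M : MartingaleSpace Ω) (B : Set (ℝ≥0 × Ω)) : Prop :=
  InstantlyEnforceable M Bᶜ

/-- Assumption A: for any `t ≥ 0` and any instantly blockable set `B`, the projection of
`B ∩ ([0,t] × Ω)` onto `Ω` belongs to `F t`. -/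
def AssumptionA (M : MartingaleSpace Ω) : Prop :=
  ∀ (t : ℝ≥0) (B : Set (ℝ≥0 × Ω)), InstantlyBlockable M B →
    MeasurableSet[M.F t] {ω | ∃ s : ℝ≥0, s ≤ t ∧ (s, ω) ∈ B}

/-- The values of `X` are real w.i.e. -/
def RealWIE (M : MartingaleSpace Ω) (X : ℝ≥0 → Ω → EReal) : Prop :=
  InstantlyEnforceable M {p : ℝ≥0 × Ω | ∃ r : ℝ, X p.1 p.2 = (r : EReal)}

/-- The set of `(t,ω)` where `sup_{s ∈ [0,t]} |X_s(ω) - X^n_s(ω)| → 0` as `n → ∞`. -/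
def unifConvSet (Xn : ℕ → ℝ≥0 → Ω → EReal) (X : ℝ≥0 → Ω → EReal) : Set (ℝ≥0 × Ω) :=
  {p | Tendsto (fun n => ⨆ s ∈ Icc (0 : ℝ≥0) p.1, (X s p.2 - Xn n s p.2).abs)
    atTop (𝓝 (0 : ℝ≥0∞))}

/-- The class `𝓜` of martingales: the smallest class of adapted, real w.i.e. processes
containing all simple capital processes and closed under locally uniform limits w.i.e. -/
inductive IsMartingale (M : MartingaleSpace Ω) : (ℝ≥0 → Ω → EReal) → Prop
  | simple (X : ℝ≥0 → Ω → ℝ) (hX : IsSimpleCapital M X) :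
      IsMartingale M fun t ω => (X t ω : EReal)
  | lim (Xn : ℕ → ℝ≥0 → Ω → EReal) (X : ℝ≥0 → Ω → EReal)
      (hXn : ∀ n, IsMartingale M (Xn n))
      (hadapted : ∀ t, Measurable[M.F t] (X t))
      (hreal : RealWIE M X)
      (hconv : InstantlyEnforceable M (unifConvSet Xn X)) :
      IsMartingale M X

/-- `X_{τ ∧ t}(ω)`. -/
def stopVal (X : ℝ≥0 → Ω → EReal) (τ : Ω → ℝ≥0∞) (t : ℝ≥0) (ω : Ω) : EReal :=
  X (stopMin τ t ω) ω

/-- The simple quadratic variation `[X]^τ_t := Σ_{n≥1} (X_{τ_n∧t} - X_{τ_{n-1}∧t})²`,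
as an element of `[0,∞]`. -/
def sqVarAlong (X : ℝ≥0 → Ω → EReal) (τ : ℕ → Ω → ℝ≥0∞) (t : ℝ≥0) (ω : Ω) : ℝ≥0∞ :=
  ∑' n : ℕ, ((stopVal X (τ (n + 1)) t ω - stopVal X (τ n) t ω) ^ 2).abs

/-- `Y^{τ,*}_t := sup_n |Y_{τ_n ∧ t}|`, as an element of `[0,∞]`. -/
def supAlong (Y : ℝ≥0 → Ω → EReal) (τ : ℕ → Ω → ℝ≥0∞) (t : ℝ≥0) (ω : Ω) : ℝ≥0∞ :=
  ⨆ n : ℕ, (stopVal Y (τ n) t ω).abs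

/-- The supremum process `Y^*_t := sup_{0 ≤ s ≤ t} |Y_s|`, as an element of `[0,∞]`. -/
def supProc (Y : ℝ≥0 → Ω → EReal) (t : ℝ≥0) (ω : Ω) : ℝ≥0∞ :=
  ⨆ s ∈ Icc (0 : ℝ≥0) t, (Y s ω).abs

/-- The hitting time `σ(X,c) := inf {t ≥ 0 : |X_t| ≥ c}`. -/
def hitting (X : ℝ≥0 → Ω → EReal) (c : ℝ) (ω : Ω) : ℝ≥0∞ :=
  ⨅ t ∈ {t : ℝ≥0 | ENNReal.ofReal c ≤ (X t ω).abs}, (t : ℝ≥0∞)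

/-- The oscillation of the trajectory of `X` on `[a,b]`. -/
def oscOn (X : ℝ≥0 → Ω → EReal) (a b : ℝ≥0) (ω : Ω) : EReal :=
  (⨆ s ∈ Icc a b, X s ω) - ⨅ s ∈ Icc a b, X s ω

/-- The set of `(t,ω)` on which the sequence `σ` finely covers `X` with accuracy `δ`:
only finitely many `σ_n(ω) ≤ t`, and the oscillation of `X(ω)` on each interval
`[σ_n(ω)∧t, σ_{n+1}(ω)∧t]` is at most `δ`. -/
def fineCoverSet (σ : ℕ → Ω → ℝ≥0∞) (X : ℝ≥0 → Ω → EReal) (δ : ℝ) : Set (ℝ≥0 × Ω) :=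
  {p | {n : ℕ | σ n p.2 ≤ (p.1 : ℝ≥0∞)}.Finite ∧
    ∀ n, oscOn X (stopMin (σ n) p.1 p.2) (stopMin (σ (n + 1)) p.1 p.2) p.2 ≤ (δ : EReal)}

/-- `σ` is a fine cover of `X` with accuracy `δ` on the set `E`. -/
def FinelyCoversOn (M : MartingaleSpace Ω) (σ : ℕ → Ω → ℝ≥0∞) (X : ℝ≥0 → Ω → EReal)
    (δ : ℝ) (E : Set (ℝ≥0 × Ω)) : Prop :=
  (∀ n, M.IsStoppingTime (σ n)) ∧ (∀ ω, Monotone fun n => σ n ω) ∧ (∀ ω, σ 0 ω = 0) ∧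
    E ⊆ fineCoverSet σ X δ

/-- `σ` is a fine cover of `X` with accuracy `δ` w.i.e. -/
def ProperSeq.FinelyCoversWIE {M : MartingaleSpace Ω} (σ : ProperSeq M)
    (X : ℝ≥0 → Ω → EReal) (δ : ℝ) : Prop :=
  InstantlyEnforceable M (fineCoverSet σ.τ X δ)

/-- The set of `(t,ω)` on which `sup_{s ∈ [0, σ(ω) ∧ t]} |Y^m_s(ω) - Y_s(ω)| → 0`, i.e.
locally uniform convergence on the random interval `[0,σ]∖{+∞}`. -/
def convWithinSet (Ym : ℕ → ℝ≥0 → Ω → EReal) (Y : ℝ≥0 → Ω → EReal) (σ : Ω → ℝ≥0∞) :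
    Set (ℝ≥0 × Ω) :=
  {p | Tendsto (fun m => ⨆ s ∈ Icc (0 : ℝ≥0) (stopMin σ p.1 p.2),
    (Ym m s p.2 - Y s p.2).abs) atTop (𝓝 (0 : ℝ≥0∞))}

/-- The set of `(t,ω)` on which `sup_{s ∈ [0,t]} |Y^m_s(ω) - Y_s(ω)| → 0`, i.e. locally
uniform convergence. -/
def locUnifConvSet (Ym : ℕ → ℝ≥0 → Ω → EReal) (Y : ℝ≥0 → Ω → EReal) : Set (ℝ≥0 × Ω) :=
  {p | Tendsto (fun m => ⨆ s ∈ Icc (0 : ℝ≥0) p.1, (Ym m s p.2 - Y s p.2).abs)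
    atTop (𝓝 (0 : ℝ≥0∞))}

/-- `Q` is a quadratic variation of `X`: a real continuous adapted process such that, for every
summable sequence of positive accuracies `δ_m` and every sequence of proper sequences of
stopping times `σ^m` finely covering `X` with accuracy `δ_m` w.i.e., and every `c > 0`, the
simple quadratic variations `[X]^{σ^m}` converge locally uniformly on `[0, σ(X,c)]∖{+∞}`
w.i.e. to `Q`. -/
structure IsQuadVar (M : MartingaleSpace Ω) (X : ℝ≥0 → Ω → EReal) (Q : ℝ≥0 → Ω → ℝ) :
    Prop where
  adapted : ∀ t, Measurable[M.F t] (Q t)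
  cont : ∀ ω, Continuous fun t => Q t ω
  conv : ∀ δ : ℕ → ℝ, (∀ m, 0 < δ m) → Summable δ →
    ∀ σ : ℕ → ProperSeq M, (∀ m, (σ m).FinelyCoversWIE X (δ m)) →
    ∀ c : ℝ, 0 < c →
      InstantlyEnforceable M (convWithinSet
        (fun m t ω => ((sqVarAlong X (σ m).τ t ω : ℝ≥0∞) : EReal))
        (fun t ω => ((Q t ω : ℝ) : EReal)) (hitting X c))

open Classical in
/-- The Lebesgue–Stieltjes measure on `ℝ` associated with a monotone continuous function
(and the zero measure otherwise). -/
def lsMeasure (a : ℝ → ℝ) : Measure ℝ :=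
  if h : Monotone a ∧ Continuous a then
    StieltjesFunction.measure ⟨a, h.1, fun _ => h.2.continuousWithinAt⟩
  else 0

/-- The pathwise Lebesgue–Stieltjes integral `∫_0^t g dа` for functions on `ℝ≥0`. -/
def lsInt (g : ℝ≥0 → ℝ) (a : ℝ≥0 → ℝ) (t : ℝ≥0) : ℝ :=
  ∫ s in Ioc (0 : ℝ) (t : ℝ), g s.toNNReal ∂(lsMeasure fun s => a s.toNNReal)

/-- The pathwise Lebesgue–Stieltjes integral `∫_0^t g d(¼ Qp − ¼ Qm)`, i.e. the integral
with respect to a quadratic covariation `[X,Y] = ¼[X+Y] − ¼[X−Y]`. -/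
def covIntegral (g : ℝ≥0 → ℝ) (Qp Qm : ℝ≥0 → ℝ) (t : ℝ≥0) : ℝ :=
  (1 / 4 : ℝ) * lsInt g Qp t - (1 / 4 : ℝ) * lsInt g Qm t

/-- The step process associated with a simple trading strategy:
`G_t = Σ_{n≥1} g_{n-1} 1_{[τ_{n-1}, τ_n)}(t)`. -/
def SimpleStrategy.step {M : MartingaleSpace Ω} (G : SimpleStrategy M) (t : ℝ≥0) (ω : Ω) :
    ℝ :=
  ∑' n : ℕ, ({t' : ℝ≥0 | G.τ.τ n ω ≤ (t' : ℝ≥0∞) ∧ (t' : ℝ≥0∞) < G.τ.τ (n + 1) ω}).indicator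
    (fun _ => G.g n ω) t

/-- The simple integral `(G·X)` of a simple trading strategy against an `EReal`-valued
process. -/
def SimpleStrategy.integralE {M : MartingaleSpace Ω} (G : SimpleStrategy M)
    (X : ℝ≥0 → Ω → EReal) (t : ℝ≥0) (ω : Ω) : EReal :=
  (G.c : EReal) + ∑' n : ℕ,
    (G.g n ω : EReal) * (stopVal X (G.τ.τ (n + 1)) t ω - stopVal X (G.τ.τ n) t ω)

/-- Membership in the space `𝓡` of generalized processes whose trajectories are Borel
measurable and real on every interval `[0,t]` w.i.e. -/
def MemR (M : MartingaleSpace Ω) (G : ℝ≥0 → Ω → EReal) : Prop :=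
  InstantlyEnforceable M {p : ℝ≥0 × Ω |
    (∀ s ∈ Icc (0 : ℝ≥0) p.1, ∃ r : ℝ, G s p.2 = (r : EReal)) ∧
    Measurable ((Icc (0 : ℝ≥0) p.1).restrict fun s => G s p.2)}

/-- The pseudo-distance `d_{∞,X,loc}(Y,Z) := Σ_{N≥1} 2^{-N} Ē((Y−Z)^*_{·∧σ(X,N)})`. -/
def dInfLoc (M : MartingaleSpace Ω) (X : ℝ≥0 → Ω → EReal) (Y Z : ℝ≥0 → Ω → EReal) :
    EReal :=
  ∑' N : ℕ, (((1 / 2 : ℝ) ^ (N + 1) : ℝ) : EReal) *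
    upperExp M (fun t ω =>
      ((⨆ s ∈ Icc (0 : ℝ≥0) (stopMin (hitting X ((N : ℝ) + 1)) t ω),
        (Y s ω - Z s ω).abs : ℝ≥0∞) : EReal))

/-- The approximating stopping times `τ^m_n` for a càdlàg integrand `G`:
`τ^m_0 = 0`, `τ^m_{n+1} = inf{t > τ^m_n : |G_t − G_{τ^m_n}| ≥ 2^{-m}}`. -/
def approxTimes (G : ℝ≥0 → Ω → ℝ) (m : ℕ) : ℕ → Ω → ℝ≥0∞
  | 0 => fun _ => 0
  | n + 1 => fun ω =>
      ⨅ t ∈ {t : ℝ≥0 | approxTimes G m n ω < (t : ℝ≥0∞) ∧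
        ((2 : ℝ) ^ m)⁻¹ ≤ |G t ω - G ((approxTimes G m n ω).toNNReal) ω|}, (t : ℝ≥0∞)

/-- The approximating simple integral `(G^m · X)` where
`G^m_t = Σ_{n≥1} G_{τ^m_{n-1}} 1_{[τ^m_{n-1}, τ^m_n)}(t)`. -/
def approxInt (G : ℝ≥0 → Ω → ℝ) (X : ℝ≥0 → Ω → EReal) (m : ℕ) (t : ℝ≥0) (ω : Ω) :
    EReal :=
  ∑' n : ℕ, ((G ((approxTimes G m n ω).toNNReal) ω : ℝ) : EReal) *
    (stopVal X (approxTimes G m (n + 1)) t ω - stopVal X (approxTimes G m n) t ω)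

/-- `I` is a model-free integral `G·X`: a representative of the `d_{∞,X,loc}`-limit of the
classes of the approximating simple integrals `G^m·X`. -/
def IsModelFreeIntegral (M : MartingaleSpace Ω) (X : ℝ≥0 → Ω → EReal) (G : ℝ≥0 → Ω → ℝ)
    (I : ℝ≥0 → Ω → EReal) : Prop :=
  Tendsto (fun m => dInfLoc M X (approxInt G X m) I) atTop (𝓝 (0 : EReal))

/-- The filtration of `M` is right-continuous. -/
def RightContinuousFiltration (M : MartingaleSpace Ω) : Prop :=
  ∀ t : ℝ≥0, M.F t = ⨅ (s : ℝ≥0) (_ : t < s), M.F s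

/-- A càdlàg function on `ℝ≥0`. -/
def IsCadlag (f : ℝ≥0 → ℝ) : Prop :=
  (∀ t, ContinuousWithinAt f (Ici t) t) ∧
    ∀ t : ℝ≥0, 0 < t → ∃ l : ℝ, Tendsto f (𝓝[<] t) (𝓝 l)

/-- The truncated variation `TV^c(x,[0,t])` of a function `x : ℝ≥0 → ℝ`. -/
def truncVar (x : ℝ≥0 → ℝ) (c : ℝ) (t : ℝ≥0) : ℝ≥0∞ :=
  ⨆ (n : ℕ) (u : Fin (n + 1) → ℝ≥0) (_ : Monotone u) (_ : ∀ i, u i ≤ t),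
    ∑ i : Fin n, ENNReal.ofReal (|x (u i.succ) - x (u i.castSucc)| - c)


/-! Assumption A makes every subset of the projection of an instantly blockable set
`B ∩ ([0,t] × Ω)` an element of `𝓕_t`: intersect `B` with the cylinder over the subset. So up to
time `t` one may discard the paths which are irregular before `t`. For the other paths, `[0,t]`
being compact, `ρ ≤ t` means that `Y` hits `F` on `[τ, t]`, i.e. that the distance from `Y` to `F`
has infimum `0` over a countable dense set of times `s ∨ τ`. If `Y_τ` is isolated in `F`, some open
`U` of a countable basis has `Y_τ ∈ U` and `F ∩ U ⊆ {Y_τ}`, and then `σ` is the time of hitting the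
closed set `F ∖ U`. -/

section HereditarilyMeasurable

open TopologicalSpace

/-- All subsets of `N` belong to `m`; such an `N` plays the role of a null set of a complete
probability space. -/
def HereditarilyMeasurable (m : MeasurableSpace Ω) (N : Set Ω) : Prop :=
  ∀ P ⊆ N, MeasurableSet[m] P

variable {m : MeasurableSpace Ω} {N : Set Ω}
variable {T E : Type*}

theorem AssumptionA.hereditarilyMeasurable {M : MartingaleSpace Ω} (hA : AssumptionA M)
    {G : Set (ℝ≥0 × Ω)} (hG : InstantlyEnforceable M G) (t : ℝ≥0) :
    HereditarilyMeasurable (M.F t) {ω | ∃ s ≤ t, (s, ω) ∉ G} := by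
  intro P hP
  obtain ⟨X, hX, hX_zero, hX_top⟩ := hG
  have hblock : InstantlyBlockable M {p | p ∉ G ∧ p.2 ∈ P} :=
    ⟨X, hX, hX_zero, fun s ω hp => hX_top s ω (not_not.1 hp).1⟩
  convert hA t _ hblock using 1
  ext ω
  constructor
  · intro hω
    obtain ⟨s, hst, hsG⟩ := hP hω
    exact ⟨s, hst, hsG, hω⟩
  · rintro ⟨_, -, -, hω⟩
    exact hω

theorem HereditarilyMeasurable.measurableSet_of_iff (hN : HereditarilyMeasurable m N)
    {P Q : Set Ω} (hQ : MeasurableSet Q) (h : ∀ ω ∉ N, ω ∈ P ↔ ω ∈ Q) : MeasurableSet P := by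
  have hdecomp : P = P ∩ N ∪ Q \ N := by
    ext ω
    by_cases hω : ω ∈ N
    · simp [hω]
    · simp [hω, h ω hω]
  rw [hdecomp]
  exact (hN _ inter_subset_right).union (hQ.diff (hN _ subset_rfl))

theorem HereditarilyMeasurable.measurable_of_eqOn_compl (hN : HereditarilyMeasurable m N)
    [MeasurableSpace E] {f g : Ω → E} (hg : Measurable g) (h : EqOn f g Nᶜ) : Measurable f :=
  fun _ hB => hN.measurableSet_of_iff (hg hB) fun ω hω => by
    rw [mem_preimage, mem_preimage, h hω]

variable [TopologicalSpace T] [TopologicalSpace E]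

theorem HereditarilyMeasurable.measurable_eval_random (hN : HereditarilyMeasurable m N)
    [MetrizableSpace T] [SecondCountableTopology T] [MeasurableSpace T] [OpensMeasurableSpace T]
    [PseudoMetrizableSpace E] [MeasurableSpace E] [BorelSpace E]
    {Z : T → Ω → E} (hZ : ∀ s, Measurable (Z s)) (hZ_cont : ∀ ω ∉ N, Continuous (Z · ω))
    {u : Ω → T} (hu : Measurable u) : Measurable fun ω => Z (u ω) ω := by
  classical
  rcases isEmpty_or_nonempty Ω with hΩ | ⟨⟨ω₀⟩⟩
  · exact measurable_of_empty _
  let x₀ : E := Z (u ω₀) ω₀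
  let Z' : T → Ω → E := fun s => N.piecewise (fun _ => x₀) (Z s)
  have hZ' (s : T) : Measurable (Z' s) := measurable_const.piecewise (hN _ subset_rfl) (hZ s)
  have hZ'_cont (ω : Ω) : Continuous (Z' · ω) := by
    by_cases hω : ω ∈ N
    · simpa [Z', hω] using continuous_const
    · simpa [Z', hω] using hZ_cont ω hω
  have hcomp : Measurable fun ω => Z' (u ω) ω :=
    (measurable_uncurry_of_continuous_of_measurable hZ'_cont hZ').comp (hu.prodMk measurable_id)
  exact hN.measurable_of_eqOn_compl hcomp fun ω hω => (piecewise_eq_of_notMem N _ _ hω).symm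

theorem iInf_infEDist_eq_zero_iff_exists_mem {K X : Type*} [TopologicalSpace K] [CompactSpace K]
    [PseudoEMetricSpace X] {f : K → X} (hf : Continuous f) {C : Set X} (hC : IsClosed C) :
    ⨅ k, Metric.infEDist (f k) C = 0 ↔ ∃ k, f k ∈ C := by
  constructor
  · intro hzero
    rcases isEmpty_or_nonempty K with hK | hK
    · simp [iInf_of_empty] at hzero
    obtain ⟨k, -, hk⟩ := isCompact_univ.exists_isMinOn univ_nonempty
      (Metric.continuous_infEDist.comp hf).continuousOn
    refine ⟨k, (Metric.mem_iff_infEDist_zero_of_closed hC).2 (le_antisymm ?_ bot_le)⟩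
    exact (le_iInf fun j => hk (mem_univ j)).trans_eq hzero
  · rintro ⟨k, hk⟩
    exact le_antisymm ((iInf_le _ k).trans_eq (Metric.infEDist_zero_of_mem hk)) bot_le

theorem HereditarilyMeasurable.measurableSet_exists_mem (hN : HereditarilyMeasurable m N)
    [CompactSpace T] [SeparableSpace T]
    [PseudoMetrizableSpace E] [MeasurableSpace E] [BorelSpace E]
    {Z : T → Ω → E} (hZ : ∀ s, Measurable (Z s)) (hZ_cont : ∀ ω ∉ N, Continuous (Z · ω))
    {C : Set E} (hC : IsClosed C) : MeasurableSet {ω | ∃ s, Z s ω ∈ C} := by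
  let _ := pseudoMetrizableSpacePseudoMetric E
  obtain ⟨D, hD_countable, hD_dense⟩ := exists_countable_dense T
  have := hD_countable.to_subtype
  have hdist : Measurable fun ω => ⨅ s : D, Metric.infEDist (Z s ω) C :=
    .iInf fun s => Metric.continuous_infEDist.measurable.comp (hZ s)
  refine hN.measurableSet_of_iff (hdist (measurableSet_singleton 0)) fun ω hω => ?_
  have hcont : Continuous fun s => Metric.infEDist (Z s ω) C :=
    Metric.continuous_infEDist.comp (hZ_cont ω hω)
  have hdense : ⨅ s : D, Metric.infEDist (Z s ω) C = ⨅ s, Metric.infEDist (Z s ω) C :=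
    hD_dense.ciInf' hcont
  rw [mem_preimage, mem_singleton_iff, hdense,
    iInf_infEDist_eq_zero_iff_exists_mem (hZ_cont ω hω) hC]
  rfl

theorem HereditarilyMeasurable.measurableSet_exists_ge_mem (hN : HereditarilyMeasurable m N)
    [LinearOrder T] [OrderClosedTopology T] [CompactSpace T]
    [MetrizableSpace T] [SecondCountableTopology T] [MeasurableSpace T] [BorelSpace T]
    [PseudoMetrizableSpace E] [MeasurableSpace E] [BorelSpace E]
    {Z : T → Ω → E} (hZ : ∀ s, Measurable (Z s)) (hZ_cont : ∀ ω ∉ N, Continuous (Z · ω))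
    {u : Ω → T} (hu : Measurable u) {C : Set E} (hC : IsClosed C) :
    MeasurableSet {ω | ∃ s, u ω ≤ s ∧ Z s ω ∈ C} := by
  have hmax : {ω | ∃ s, u ω ≤ s ∧ Z s ω ∈ C} = {ω | ∃ s, Z (max s (u ω)) ω ∈ C} := by
    ext ω
    constructor
    · rintro ⟨s, hus, hsC⟩
      exact ⟨s, by rwa [max_eq_left hus]⟩
    · rintro ⟨s, hsC⟩
      exact ⟨_, le_max_right s (u ω), hsC⟩
  rw [hmax]
  exact hN.measurableSet_exists_mem
    (fun s => hN.measurable_eval_random hZ hZ_cont (measurable_const.max hu))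
    (fun ω hω => (hZ_cont ω hω).comp (continuous_id.max continuous_const)) hC

end HereditarilyMeasurable

section IsolatedPoint

open TopologicalSpace

variable {X : Type*} {A U : Set X}

theorem measurableSet_setOf_mem_and_inter_subset_singleton [MeasurableSpace X]
    [MeasurableSingletonClass X] (A : Set X) (hU : MeasurableSet U) :
    MeasurableSet {x | x ∈ U ∧ A ∩ U ⊆ {x}} := by
  rcases (A ∩ U).eq_empty_or_nonempty with hempty | ⟨a, ha⟩
  · simpa [hempty] using hU
  · have hsub : {x | x ∈ U ∧ A ∩ U ⊆ {x}} ⊆ {a} := fun x hx => (hx.2 ha).symm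
    exact (subsingleton_singleton.anti hsub).measurableSet

theorem exists_mem_countableBasis_inter_subset_singleton [TopologicalSpace X]
    [SecondCountableTopology X] {x : X} (hx : x ∉ closure (A \ {x})) :
    ∃ U ∈ countableBasis X, x ∈ U ∧ A ∩ U ⊆ {x} := by
  obtain ⟨U, hU, hxU, hUA⟩ :=
    (isBasis_countableBasis X).exists_subset_of_mem_open hx isClosed_closure.isOpen_compl
  refine ⟨U, hU, hxU, fun y hy => ?_⟩
  by_contra hyx
  exact hUA hy.2 (subset_closure ⟨hy.1, hyx⟩)

theorem closure_diff_inter_subset_diff [TopologicalSpace X] {R : Set X}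
    (hA : closure A ∩ R ⊆ A) (hU : IsOpen U) : closure (A \ U) ∩ R ⊆ A \ U :=
  fun _ hx => ⟨hA ⟨closure_mono sdiff_subset hx.1, hx.2⟩,
    closure_minimal (fun _ hy => hy.2) hU.isClosed_compl hx.1⟩

end IsolatedPoint

section StopMin

variable {τ : Ω → ℝ≥0∞} {t : ℝ≥0} {ω : Ω}

theorem coe_stopMin (τ : Ω → ℝ≥0∞) (t : ℝ≥0) (ω : Ω) :
    (stopMin τ t ω : ℝ≥0∞) = min (τ ω) t :=
  ENNReal.coe_toNNReal (ne_top_of_le_ne_top ENNReal.coe_ne_top (min_le_right _ _))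

theorem stopMin_le_iff {s : ℝ≥0} : stopMin τ t ω ≤ s ↔ τ ω ≤ s ∨ t ≤ s := by
  rw [← ENNReal.coe_le_coe, coe_stopMin, min_le_iff, ENNReal.coe_le_coe]

theorem stopMin_mem_Icc (τ : Ω → ℝ≥0∞) (t : ℝ≥0) (ω : Ω) : stopMin τ t ω ∈ Icc 0 t :=
  ⟨zero_le, stopMin_le_iff.2 (.inr le_rfl)⟩

theorem stopMin_of_le (h : τ ω ≤ t) : stopMin τ t ω = (τ ω).toNNReal := by
  rw [stopMin, min_eq_left h]

theorem MartingaleSpace.IsStoppingTime.measurable_stopMin {M : MartingaleSpace Ω}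
    (hτ : M.IsStoppingTime τ) (t : ℝ≥0) : Measurable[M.F t] (stopMin τ t) := by
  let _ := M.F t
  refine measurable_of_Iic fun a => ?_
  rcases le_or_gt t a with hta | hat
  · convert MeasurableSet.univ
    exact eq_univ_of_forall fun ω => stopMin_le_iff.2 (.inr hta)
  · convert M.mono hat.le _ (hτ a) using 1
    ext ω
    exact stopMin_le_iff.trans (or_iff_left hat.not_ge)

end StopMin

section FirstHit

open TopologicalSpace

variable {E : Type*}

/-- The first time at or after `τ` at which `Y` is in `A`, with value `⊤` if there is none. -/
def firstHit (Y : ℝ≥0 → Ω → E) (τ : Ω → ℝ≥0∞) (A : Set E) (ω : Ω) : ℝ≥0∞ :=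
  ⨅ t ∈ {t : ℝ≥0 | τ ω ≤ (t : ℝ≥0∞) ∧ Y t ω ∈ A}, (t : ℝ≥0∞)

/-- The first time after `τ` at which `Y` is in `A` at a point other than `Y_τ`, with value `⊤`
if there is none. Where `τ = ⊤` the junk value `(τ ω).toNNReal = 0` is harmless, since no
`t : ℝ≥0` comes after `τ`. -/
def firstHitElsewhere (Y : ℝ≥0 → Ω → E) (τ : Ω → ℝ≥0∞) (A : Set E) (ω : Ω) : ℝ≥0∞ :=
  ⨅ t ∈ {t : ℝ≥0 | τ ω < (t : ℝ≥0∞) ∧ Y t ω ∈ A ∧ Y t ω ≠ Y (τ ω).toNNReal ω}, (t : ℝ≥0∞)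

theorem biInf_coe_le_coe_iff {I : Set ℝ≥0} {t : ℝ≥0} (hI : t ∈ closure I → t ∈ I) :
    ⨅ s ∈ I, (s : ℝ≥0∞) ≤ t ↔ ∃ s ∈ I, s ≤ t := by
  constructor
  · intro hle
    by_contra! hlt
    have hglb : IsGLB I t := by
      refine ⟨fun s hs => (hlt s hs).le, fun b hb => ENNReal.coe_le_coe.1 (le_trans ?_ hle)⟩
      exact le_iInf₂ fun s hs => ENNReal.coe_le_coe.2 (hb hs)
    have hne : I.Nonempty := by
      by_contra! hempty
      simp [hempty] at hle
    exact lt_irrefl t (hlt t (hI (hglb.mem_closure hne)))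
  · rintro ⟨s, hsI, hst⟩
    exact (iInf₂_le s hsI).trans (ENNReal.coe_le_coe.2 hst)

variable {Y : ℝ≥0 → Ω → E} {τ : Ω → ℝ≥0∞} {A : Set E} {t : ℝ≥0} {ω : Ω}

theorem firstHitElsewhere_eq_firstHit_diff {U : Set E}
    (hU : Y (τ ω).toNNReal ω ∈ U) (hAU : A ∩ U ⊆ {Y (τ ω).toNNReal ω}) :
    firstHitElsewhere Y τ A ω = firstHit Y τ (A \ U) ω := by
  have hvalue {y : E} (hy : y ∈ A) : y ≠ Y (τ ω).toNNReal ω ↔ y ∉ U :=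
    ⟨fun hne hyU => hne (hAU ⟨hy, hyU⟩), fun hyU heq => hyU (heq ▸ hU)⟩
  have htimes : {t : ℝ≥0 | τ ω < (t : ℝ≥0∞) ∧ Y t ω ∈ A ∧ Y t ω ≠ Y (τ ω).toNNReal ω} =
      {t : ℝ≥0 | τ ω ≤ (t : ℝ≥0∞) ∧ Y t ω ∈ A \ U} := by
    ext s
    constructor
    · rintro ⟨hτs, hsA, hne⟩
      exact ⟨hτs.le, hsA, (hvalue hsA).1 hne⟩
    · rintro ⟨hτs, hsA, hsU⟩
      have hne := (hvalue hsA).2 hsU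
      refine ⟨hτs.lt_of_ne fun heq => hne ?_, hsA, hne⟩
      rw [heq, ENNReal.toNNReal_coe]
  rw [firstHitElsewhere, firstHit, htimes]

variable [TopologicalSpace E]

theorem firstHit_le_coe_iff (hcont : ContinuousAt (Y · ω) t)
    (hA : Y t ω ∈ closure A → Y t ω ∈ A) :
    firstHit Y τ A ω ≤ t ↔ ∃ s ≤ t, τ ω ≤ s ∧ Y s ω ∈ A := by
  have hclosure : t ∈ closure {s : ℝ≥0 | τ ω ≤ (s : ℝ≥0∞) ∧ Y s ω ∈ A} →
      t ∈ {s : ℝ≥0 | τ ω ≤ (s : ℝ≥0∞) ∧ Y s ω ∈ A} := by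
    intro ht
    have hIci : IsClosed {s : ℝ≥0 | τ ω ≤ (s : ℝ≥0∞)} :=
      isClosed_le continuous_const ENNReal.continuous_coe
    refine ⟨closure_minimal (fun s hs => hs.1) hIci ht, hA ?_⟩
    exact closure_mono (image_subset_iff.2 fun s hs => hs.2)
      (mem_closure_image (f := (Y · ω)) hcont ht)
  rw [firstHit, biInf_coe_le_coe_iff hclosure]
  exact ⟨fun ⟨s, hs, hst⟩ => ⟨s, hst, hs⟩, fun ⟨s, hst, hs⟩ => ⟨s, hs, hst⟩⟩

theorem setOf_firstHitElsewhere_le_eq_iUnion [SecondCountableTopology E]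
    (hA : ∀ ω, τ ω ≠ ⊤ → Y (τ ω).toNNReal ω ∉ closure (A \ {Y (τ ω).toNNReal ω})) (t : ℝ≥0) :
    {ω | firstHitElsewhere Y τ A ω ≤ t} = ⋃ U ∈ countableBasis E,
      {ω | τ ω ≤ t ∧ Y (τ ω).toNNReal ω ∈ {x | x ∈ U ∧ A ∩ U ⊆ {x}}} ∩
        {ω | firstHit Y τ (A \ U) ω ≤ t} := by
  ext ω
  simp only [mem_iUnion₂]
  constructor
  · intro hle
    have hτt : τ ω ≤ t := (le_iInf₂ fun s hs => hs.1.le).trans hle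
    have hτ_top : τ ω ≠ ⊤ := ne_top_of_le_ne_top ENNReal.coe_ne_top hτt
    obtain ⟨U, hU, hτU, hAU⟩ := exists_mem_countableBasis_inter_subset_singleton (hA ω hτ_top)
    exact ⟨U, hU, ⟨hτt, hτU, hAU⟩,
      (firstHitElsewhere_eq_firstHit_diff hτU hAU).ge.trans hle⟩
  · rintro ⟨U, -, ⟨-, hτU, hAU⟩, hle⟩
    exact (firstHitElsewhere_eq_firstHit_diff hτU hAU).trans_le hle

end FirstHit

section Stopping

open TopologicalSpace

variable {E : Type*} [TopologicalSpace E] [PseudoMetrizableSpace E] [MeasurableSpace E]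
  [BorelSpace E] {M : MartingaleSpace Ω} {Y : ℝ≥0 → Ω → E} {τ : Ω → ℝ≥0∞} {t : ℝ≥0} {N : Set Ω}

theorem MartingaleSpace.IsStoppingTime.measurableSet_le_and_mem (hτ : M.IsStoppingTime τ)
    (hY : ∀ t, Measurable[M.F t] (Y t)) (hN : HereditarilyMeasurable (M.F t) N)
    (hcont : ∀ ω ∉ N, ∀ s ≤ t, ContinuousAt (Y · ω) s) {B : Set E} (hB : MeasurableSet B) :
    MeasurableSet[M.F t] {ω | τ ω ≤ t ∧ Y (τ ω).toNNReal ω ∈ B} := by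
  let _ := M.F t
  have hvalue : Measurable fun ω => Y (stopMin τ t ω) ω :=
    hN.measurable_eval_random (Z := fun (s : Icc 0 t) ω => Y s ω)
      (u := fun ω => ⟨stopMin τ t ω, stopMin_mem_Icc τ t ω⟩)
      (fun s => (hY s).mono (M.mono s.2.2) le_rfl)
      (fun ω hω =>
        (continuousOn_of_forall_continuousAt fun s hs => hcont ω hω s hs.2).domRestrict)
      (hτ.measurable_stopMin t).subtype_mk
  convert (hτ t).inter (hvalue hB) using 1
  ext ω
  exact and_congr_right fun hτt => by rw [mem_preimage, stopMin_of_le hτt]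

theorem MartingaleSpace.IsStoppingTime.measurableSet_firstHit_le (hτ : M.IsStoppingTime τ)
    (hY : ∀ t, Measurable[M.F t] (Y t)) (hN : HereditarilyMeasurable (M.F t) N)
    (hcont : ∀ ω ∉ N, ∀ s ≤ t, ContinuousAt (Y · ω) s) {A : Set E}
    (hA : ∀ ω ∉ N, ∀ s ≤ t, Y s ω ∈ closure A → Y s ω ∈ A) :
    MeasurableSet[M.F t] {ω | firstHit Y τ A ω ≤ t} := by
  let _ := M.F t
  have hhit : MeasurableSet {ω | ∃ s : Icc 0 t,
      (⟨stopMin τ t ω, stopMin_mem_Icc τ t ω⟩ : Icc 0 t) ≤ s ∧ Y s ω ∈ closure A} :=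
    hN.measurableSet_exists_ge_mem (Z := fun (s : Icc 0 t) ω => Y s ω)
      (fun s => (hY s).mono (M.mono s.2.2) le_rfl)
      (fun ω hω =>
        (continuousOn_of_forall_continuousAt fun s hs => hcont ω hω s hs.2).domRestrict)
      (hτ.measurable_stopMin t).subtype_mk isClosed_closure
  refine hN.measurableSet_of_iff ((hτ t).inter hhit) fun ω hω => ?_
  refine (firstHit_le_coe_iff (hcont ω hω t le_rfl) (hA ω hω t le_rfl)).trans ⟨?_, ?_⟩
  · rintro ⟨s, hst, hτs, hsA⟩
    exact ⟨hτs.trans (ENNReal.coe_le_coe.2 hst), ⟨s, zero_le, hst⟩, stopMin_le_iff.2 (.inl hτs),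
      subset_closure hsA⟩
  · rintro ⟨hτt, ⟨s, _, hst⟩, hτs, hsA⟩
    refine ⟨s, hst, ?_, hA ω hω s hst hsA⟩
    exact (stopMin_le_iff.1 hτs).elim id fun hts => hτt.trans (ENNReal.coe_le_coe.2 hts)

theorem hittingTimes_are_stoppingTimes_general {E : Type*} [TopologicalSpace E]
    [MetrizableSpace E] [SecondCountableTopology E] [MeasurableSpace E] [BorelSpace E]
    {M : MartingaleSpace Ω} (hM : AssumptionA M)
    {Y : ℝ≥0 → Ω → E} (hY : ∀ t, Measurable[M.F t] (Y t)) {R : Set E}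
    (hcont : InstantlyEnforceable M
      {p : ℝ≥0 × Ω | Y p.1 p.2 ∈ R ∧ ContinuousAt (fun s => Y s p.2) p.1})
    {τ : Ω → ℝ≥0∞} (hτ : M.IsStoppingTime τ) {A : Set E} (hA : closure A ∩ R ⊆ A) :
    M.IsStoppingTime (firstHit Y τ A) ∧
      ((∀ ω, τ ω ≠ ⊤ → Y (τ ω).toNNReal ω ∉ closure (A \ {Y (τ ω).toNNReal ω})) →
        M.IsStoppingTime (firstHitElsewhere Y τ A)) := by
  let N (t : ℝ≥0) : Set Ω := {ω | ∃ s ≤ t, ¬(Y s ω ∈ R ∧ ContinuousAt (Y · ω) s)}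
  have hN (t : ℝ≥0) : HereditarilyMeasurable (M.F t) (N t) := hM.hereditarilyMeasurable hcont t
  have hreg {t : ℝ≥0} : ∀ ω ∉ N t, ∀ s ≤ t, Y s ω ∈ R ∧ ContinuousAt (Y · ω) s :=
    fun ω hω s hst => by_contra fun h => hω ⟨s, hst, h⟩
  have hhit {C : Set E} (hC : closure C ∩ R ⊆ C) : M.IsStoppingTime (firstHit Y τ C) := fun t =>
    hτ.measurableSet_firstHit_le hY (hN t) (fun ω hω s hst => (hreg ω hω s hst).2)
      fun ω hω s hst hsC => hC ⟨hsC, (hreg ω hω s hst).1⟩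
  refine ⟨hhit hA, fun hisolated t => ?_⟩
  rw [setOf_firstHitElsewhere_le_eq_iUnion hisolated]
  refine MeasurableSet.biUnion (countable_countableBasis E) fun U hU => ?_
  have hU_open : IsOpen U := isOpen_of_mem_countableBasis hU
  exact (hτ.measurableSet_le_and_mem hY (hN t) (fun ω hω s hst => (hreg ω hω s hst).2)
    (measurableSet_setOf_mem_and_inter_subset_singleton A hU_open.measurableSet)).inter
    (hhit (closure_diff_inter_subset_diff hA hU_open) t)

end Stopping

section Embedding

open Topology

variable {X X' : Type*} [TopologicalSpace X] [TopologicalSpace X'] {f : X → X'} {F : Set X}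

theorem closure_image_inter_range_subset_image (hf : IsInducing f) (hF : IsClosed F) :
    closure (f '' F) ∩ range f ⊆ f '' F := by
  rintro _ ⟨hx, x, rfl⟩
  refine mem_image_of_mem f (hF.closure_subset ?_)
  rwa [hf.closure_eq_preimage_closure_image]

theorem notMem_closure_image_diff_singleton (hf : IsEmbedding f) {x : X}
    (hx : 𝓝[F \ {x}] x = ⊥) : f x ∉ closure (f '' F \ {f x}) := by
  rw [← image_singleton, ← image_sdiff hf.injective, ← mem_preimage,
    ← hf.closure_eq_preimage_closure_image, mem_closure_iff_nhdsWithin_neBot, hx]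
  exact not_neBot.2 rfl

end Embedding

theorem firstHit_toEReal_image (Y : ℝ≥0 → Ω → EReal) (τ : Ω → ℝ≥0∞) (F : Set ℝ) :
    firstHit Y τ (Real.toEReal '' F) = fun ω =>
      ⨅ t ∈ {t : ℝ≥0 | τ ω ≤ (t : ℝ≥0∞) ∧ ∃ r ∈ F, Y t ω = (r : EReal)}, (t : ℝ≥0∞) := by
  ext ω
  simp only [firstHit, mem_image, eq_comm]

theorem firstHitElsewhere_toEReal_image (Y : ℝ≥0 → Ω → EReal) (τ : Ω → ℝ≥0∞) (F : Set ℝ) :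
    firstHitElsewhere Y τ (Real.toEReal '' F) = fun ω =>
      ⨅ t ∈ {t : ℝ≥0 | τ ω < (t : ℝ≥0∞) ∧
        ∃ r ∈ F, Y t ω = (r : EReal) ∧ Y t ω ≠ Y ((τ ω).toNNReal) ω}, (t : ℝ≥0∞) := by
  ext ω
  simp only [firstHitElsewhere, mem_image, ← and_assoc, exists_and_right, eq_comm]

/-- for a process `Y` with trajectories continuous w.i.e., the hitting times
`ρ(ω) = inf {t ≥ τ(ω) : Y_t ∈ F}` of a closed set `F` after a stopping time `τ` are
stopping times, and so are `σ(ω) = inf {t > τ(ω) : Y_t ∈ F ∖ {Y_{τ(ω)}}}` provided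
`Y_{τ(ω)}` is an isolated point of `F` whenever `τ(ω) < +∞`. -/
theorem hittingTimes_are_stoppingTimes (M : MartingaleSpace Ω) (hA : AssumptionA M)
    (Y : ℝ≥0 → Ω → EReal) (hadapted : ∀ t, Measurable[M.F t] (Y t))
    (hcont : InstantlyEnforceable M {p : ℝ≥0 × Ω |
      (∃ r : ℝ, Y p.1 p.2 = (r : EReal)) ∧ ContinuousAt (fun s => Y s p.2) p.1})
    (τ : Ω → ℝ≥0∞) (hτ : M.IsStoppingTime τ) (F : Set ℝ) (hF : IsClosed F) :
    M.IsStoppingTime (fun ω =>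
      ⨅ t ∈ {t : ℝ≥0 | τ ω ≤ (t : ℝ≥0∞) ∧ ∃ r ∈ F, Y t ω = (r : EReal)}, (t : ℝ≥0∞)) ∧
    ((∀ ω, τ ω ≠ ⊤ → ∃ r : ℝ, Y ((τ ω).toNNReal) ω = (r : EReal) ∧ r ∈ F ∧
        𝓝[F \ {r}] r = ⊥) →
      M.IsStoppingTime (fun ω =>
        ⨅ t ∈ {t : ℝ≥0 | τ ω < (t : ℝ≥0∞) ∧
          ∃ r ∈ F, Y t ω = (r : EReal) ∧ Y t ω ≠ Y ((τ ω).toNNReal) ω}, (t : ℝ≥0∞))) := by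
  rw [← firstHit_toEReal_image, ← firstHitElsewhere_toEReal_image]
  have hcont_range : InstantlyEnforceable M {p : ℝ≥0 × Ω |
      Y p.1 p.2 ∈ range Real.toEReal ∧ ContinuousAt (fun s => Y s p.2) p.1} := by
    simpa only [mem_range, eq_comm] using hcont
  refine (hittingTimes_are_stoppingTimes_general hA hadapted hcont_range hτ
    (closure_image_inter_range_subset_image EReal.isEmbedding_coe.isInducing hF)).imp_right ?_
  intro hσ hisolated
  refine hσ fun ω hω => ?_
  obtain ⟨r, hr, -, hbot⟩ := hisolated ω hω
  exact hr ▸ notMem_closure_image_diff_singleton EReal.isEmbedding_coe hbot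

end ModelFreeBDG
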